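/- Let 𝒞 be a cocomplete category that is generated under colimits by its compact projective objects. Then every object of 𝒞 is a filtered colimit of compact objects of 𝒞, i.e. 𝒞 is generated under filtered colimits by its compact objects. -/

import Mathlib

open CategoryTheory CategoryTheory.Limits Opposite

universe v u

/-- An object `X` of a category `C` is compact (of finite presentation) if
`Hom_C(X, -)` preserves filtered colimits. -/
def IsCompactObj (C : Type u) [Category.{v} C] (X : C) : Prop :=
  ∀ (J : Type v) [SmallCategory J] [IsFiltered J],
    Nonempty (PreservesColimitsOfShape J (coyoneda.obj (op X)))

/-- An object `X` of a category `C` is compact projective (strongly of finite presentation)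
if `Hom_C(X, -)` preserves filtered colimits and reflexive coequalizers. -/
def IsCompactProjectiveObj (C : Type u) [Category.{v} C] (X : C) : Prop :=
  IsCompactObj C X ∧
    ∀ {Y Z : C} (f g : Y ⟶ Z) (s : Z ⟶ Y), s ≫ f = 𝟙 Z → s ≫ g = 𝟙 Z →
      Nonempty (PreservesColimit (parallelPair f g) (coyoneda.obj (op X)))

/-- A class of objects of `C` is closed under (small) colimits if the colimit point of any
small diagram all of whose objects belong to the class again belongs to the class. -/
def ClosedUnderColimits (C : Type u) [Category.{v} C] (P : Set C) : Prop :=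
  ∀ (J : Type v) [SmallCategory J], ∀ (F : J ⥤ C) (c : Cocone F),
    IsColimit c → (∀ j, F.obj j ∈ P) → c.pt ∈ P

/-- A cocomplete category `C` is generated under colimits by its compact projective
objects if the only class of objects of `C` containing all compact projective objects and
closed under colimits consists of all objects of `C`. -/
def GeneratedByCompactProjectives (C : Type u) [Category.{v} C] : Prop :=
  ∀ P : Set C, ClosedUnderColimits C P →
    (∀ X : C, IsCompactProjectiveObj C X → X ∈ P) → ∀ X : C, X ∈ P

/-- Data exhibiting the object `X` as a filtered colimit of compact objects of `C`. -/
structure CompactFilteredPresentation (C : Type u) [Category.{v} C] (X : C) where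
  /-- the filtered index category -/
  J : Type v
  [cat : SmallCategory J]
  [filt : IsFiltered J]
  /-- the diagram of compact objects -/
  F : J ⥤ C
  compact : ∀ j, IsCompactObj C (F.obj j)
  /-- a colimit cocone for the diagram, whose point is isomorphic to `X` -/
  c : Cocone F
  isColimit : IsColimit c
  iso : c.pt ≅ X

/-!
An object built from compact objects by colimits only involves a small set `P` of them. Let `S` be
the closure of `P` under finite colimits: it is essentially small and consists of compact objects,
and every `S / X` is filtered. Let `e : L ⟶ X` be the canonical map from the colimit of
`S / X ⥤ C`. By compactness a map `G ⟶ L` with `G` in `S` factors through some stage of this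
diagram, hence, `S` being full, it is itself one of the colimit inclusions; so `Hom(G, e)` is
bijective. The objects `T` for which `Hom(T, e)` is bijective are closed under colimits, so both `L`
and `X` are among them, and `e` is an isomorphism.
-/

universe w

section DenseAt

variable {C : Type*} [Category* C] {D : Type*} [Category* D] {F : D ⥤ C} {X : C}

lemma bijective_comp_of_isColimit_costructuredArrow (κ : Cardinal.{w}) [Fact κ.IsRegular]
    [LocallySmall.{w} C] [EssentiallySmall.{w} D] [F.Full]
    [∀ d, IsCardinalPresentable (F.obj d) κ] [IsCardinalFiltered (CostructuredArrow F X) κ]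
    {c : Cocone (CostructuredArrow.proj F X ⋙ F)} (hc : IsColimit c) {e : c.pt ⟶ X}
    (he : ∀ f, c.ι.app f ≫ e = f.hom) (d : D) :
    Function.Bijective (fun g : F.obj d ⟶ c.pt ↦ g ≫ e) := by
  let ι (f : F.obj d ⟶ X) : F.obj d ⟶ c.pt := c.ι.app (CostructuredArrow.mk f)
  refine Function.bijective_iff_has_inverse.2 ⟨ι, fun g ↦ ?_, fun f ↦ he (.mk f)⟩
  obtain ⟨f, p : F.obj d ⟶ F.obj f.left, rfl⟩ :=
    IsCardinalPresentable.exists_hom_of_isColimit κ hc g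
  have comp_e : (p ≫ c.ι.app f) ≫ e = p ≫ f.hom :=
    (Category.assoc _ _ _).trans (congrArg (p ≫ ·) (he f))
  let φ : CostructuredArrow.mk (p ≫ f.hom) ⟶ f := CostructuredArrow.homMk (F.preimage p) (by simp)
  calc
    ι ((p ≫ c.ι.app f) ≫ e) = ι (p ≫ f.hom) := congrArg ι comp_e
    _ = F.map (F.preimage p) ≫ c.ι.app f := (c.w φ).symm
    _ = p ≫ c.ι.app f := by rw [F.map_preimage]

lemma isDenseAt_of_colimitsClosure (κ : Cardinal.{w}) [Fact κ.IsRegular]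
    [LocallySmall.{w} C] [EssentiallySmall.{w} D] [F.Full]
    [∀ d, IsCardinalPresentable (F.obj d) κ] [IsCardinalFiltered (CostructuredArrow F X) κ]
    [HasColimit (CostructuredArrow.proj F X ⋙ F)]
    {α : Type*} {K : α → Type*} [∀ a, Category* (K a)]
    (hX : (ObjectProperty.ofObj F.obj).colimitsClosure K X) :
    F.isDenseAt X := by
  let canonical := (Functor.LeftExtension.mk (𝟭 C) F.rightUnitor.inv).coconeAt X
  let e := colimit.desc _ canonical
  let colocal := (MorphismProperty.single e).isColocal
  have range_le : ObjectProperty.ofObj F.obj ≤ colocal := by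
    rintro _ ⟨d⟩
    refine (MorphismProperty.isColocal_single_iff_bijective e _).2 ?_
    exact bijective_comp_of_isColimit_costructuredArrow κ (colimit.isColimit _)
      (fun f ↦ (colimit.ι_desc canonical f).trans (Category.id_comp _)) d
  have colimit_mem : colocal (colimit (CostructuredArrow.proj F X ⋙ F)) :=
    colocal.prop_colimit _ fun f ↦ range_le _ ⟨f.left⟩
  have X_mem : colocal X := ObjectProperty.colimitsClosure_le range_le _ hX
  have : IsIso e := (colocal.isColocal_iff_isIso e colimit_mem X_mem).1 fun _ hY ↦ hY e ⟨⟨⟩⟩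
  exact ⟨(colimit.isColimit _).ofIsoColimit (Cocone.ext (asIso e))⟩

end DenseAt

lemma exists_small_le_colimitsClosure {C : Type*} [Category* C] {P : ObjectProperty C}
    {α : Type*} {K : α → Type*} [∀ a, Category* (K a)] [∀ a, Small.{w} (K a)] {X : C}
    (hX : P.colimitsClosure K X) :
    ∃ Q ≤ P, ObjectProperty.Small.{w} Q ∧ Q.colimitsClosure K X := by
  induction hX with
  | of_mem X hX =>
    exact ⟨.singleton X, by simpa, inferInstance, .of_mem X (by simp)⟩
  | of_isoClosure e _ ih =>
    obtain ⟨Q, hQP, _, hQ⟩ := ih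
    exact ⟨Q, hQP, inferInstance, .of_isoClosure e hQ⟩
  | of_colimitPresentation pres _ ih =>
    choose Q hQP _ hQ using ih
    exact ⟨⨆ k, Q k, iSup_le hQP, inferInstance, .of_colimitPresentation pres fun k ↦
      ObjectProperty.colimitsClosure_monotone K (le_iSup Q k) _ (hQ k)⟩

section Presentable

variable {C : Type*} [Category* C] [HasColimitsOfSize.{w, w} C] [LocallySmall.{w} C]

lemma isDenseAt_colimitsCardinalClosure_ι {κ : Cardinal.{w}} [Fact κ.IsRegular]
    {P : ObjectProperty C} [ObjectProperty.EssentiallySmall.{w} P]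
    (hP : P ≤ isCardinalPresentable C κ) {α : Type*} {K : α → Type*} [∀ a, Category* (K a)]
    {X : C} (hX : P.colimitsClosure K X) :
    (P.colimitsCardinalClosure κ).ι.isDenseAt X := by
  let S := P.colimitsCardinalClosure κ
  have (G : S.FullSubcategory) : IsCardinalPresentable (S.ι.obj G) κ :=
    P.colimitsCardinalClosure_le_isCardinalPresentable hP _ G.property
  have : HasColimitsOfShape (CostructuredArrow S.ι X) C :=
    hasColimitsOfShape_of_equivalence (equivSmallModel.{w} (CostructuredArrow S.ι X)).symm
  have P_le : P ≤ ObjectProperty.ofObj S.ι.obj := fun Y hY ↦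
    ⟨(⟨Y, P.le_colimitsCardinalClosure κ Y hY⟩ : S.FullSubcategory)⟩
  exact isDenseAt_of_colimitsClosure κ (ObjectProperty.colimitsClosure_monotone K P_le X hX)

lemma exists_isCardinalFiltered_colimitOfShape {κ : Cardinal.{w}} [Fact κ.IsRegular]
    {α : Type*} {K : α → Type*} [∀ a, Category* (K a)] [∀ a, Small.{w} (K a)] {X : C}
    (hX : (isCardinalPresentable C κ).colimitsClosure K X) :
    ∃ (J : Type w) (_ : SmallCategory J) (_ : IsCardinalFiltered J κ),
      Nonempty ((isCardinalPresentable C κ).ColimitOfShape J X) := by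
  obtain ⟨P, hP, _, hPX⟩ := exists_small_le_colimitsClosure hX
  obtain ⟨dense⟩ := isDenseAt_colimitsCardinalClosure_ι hP hPX
  let S := P.colimitsCardinalClosure κ
  let E := equivSmallModel.{w} (CostructuredArrow S.ι X)
  let canonical : (isCardinalPresentable C κ).ColimitOfShape (CostructuredArrow S.ι X) X :=
    { diag := _
      ι := _
      isColimit := dense
      prop_diag_obj f :=
        P.colimitsCardinalClosure_le_isCardinalPresentable hP _ f.left.property }
  exact ⟨_, inferInstance, IsCardinalFiltered.of_equivalence κ E, ⟨canonical.reindex E.inverse⟩⟩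

end Presentable

section Compact

attribute [local instance] Cardinal.fact_isRegular_aleph0

variable {C : Type u} [Category.{v} C]

lemma isCompactObj_iff_isFinitelyPresentable {X : C} :
    IsCompactObj C X ↔ IsFinitelyPresentable.{v} X := by
  rw [isFinitelyPresentable_iff_preservesFilteredColimits]
  exact ⟨fun h ↦ ⟨fun J _ _ ↦ (h J).some⟩, fun h J _ _ ↦ ⟨h.preserves_filtered_colimits J⟩⟩

lemma closedUnderColimits_colimitsClosure (P : ObjectProperty C) :
    ClosedUnderColimits C {X | P.colimitsClosure (fun J : Cat.{v, v} ↦ J) X} :=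
  fun J _ _ _ hc hF ↦ .of_colimitPresentation (a := Cat.of J) ⟨_, _, hc⟩ hF

theorem exists_filtered_presentation_by_compacts_general [HasColimits C] (X : C)
    (hX : ∀ P : Set C, ClosedUnderColimits C P → (∀ Y : C, IsCompactObj C Y → Y ∈ P) → X ∈ P) :
    Nonempty (CompactFilteredPresentation C X) := by
  have X_mem : (isCardinalPresentable C Cardinal.aleph0.{v}).colimitsClosure
      (fun J : Cat.{v, v} ↦ J) X :=
    hX _ (closedUnderColimits_colimitsClosure _) fun Y hY ↦
      .of_mem Y (isCompactObj_iff_isFinitelyPresentable.1 hY)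
  obtain ⟨J, _, hJ, ⟨pres⟩⟩ := exists_isCardinalFiltered_colimitOfShape X_mem
  rw [isCardinalFiltered_aleph0_iff] at hJ
  exact ⟨{
    J := J
    F := pres.diag
    compact j := isCompactObj_iff_isFinitelyPresentable.2 (pres.prop_diag_obj j)
    c := pres.cocone
    isColimit := pres.isColimit
    iso := Iso.refl X }⟩

end Compact

/-- In a cocomplete category generated under colimits by its compact projective objects,
every object is a filtered colimit of compact objects. -/
theorem exists_filtered_presentation_by_compacts
    (C : Type u) [Category.{v} C] [HasColimits C]
    (hgen : GeneratedByCompactProjectives C) (X : C) :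
    Nonempty (CompactFilteredPresentation C X) :=
  exists_filtered_presentation_by_compacts_general X fun P hP hcompact ↦
    hgen P hP (fun Y hY ↦ hcompact Y hY.1) X
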